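/- Pruning step for nonnegative quadrature rules: Let D be a set, V a finite-dimensional real vector space of real-valued functions on D, and L : V → ℝ a linear functional. Suppose points x_1,…,x_M ∈ D and nonnegative weights w_1,…,w_M ≥ 0 satisfy Σ_i w_i f(x_i) = L(f) for all f ∈ V, and suppose the number of indices i with w_i > 0 is strictly greater than dim V. Then there exist nonnegative weights w'_1,…,w'_M ≥ 0 with Σ_i w'_i f(x_i) = L(f) for all f ∈ V, such that the support {i : w'_i > 0} is a proper subset of {i : w_i > 0}. -/

import Mathlib

/-!
More than `dim V` evaluation functionals are linearly dependent in the dual of `V`, so some nonzero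
weight vector `d` supported on the positive nodes annihilates `V`; up to sign, `d` has a positive
entry. Moving from `w` along the ray `w - t • d` preserves exactness, and the first `t` at which a
coordinate reaches zero is the minimum of `w i / d i` over the indices with `0 < d i`.
-/

theorem not_linearIndepOn_of_finrank_lt_card {ι R E : Type*} [Ring R] [StrongRankCondition R]
    [AddCommGroup E] [Module R E] [Module.Finite R E] (v : ι → E) {s : Finset ι}
    (hs : Module.finrank R E < s.card) : ¬ LinearIndepOn R v (s : Set ι) := fun hv =>
  hs.not_ge <| by
    simpa only [Finset.coe_sort_coe, Fintype.card_coe] using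
      hv.linearIndependent.fintype_card_le_finrank

theorem exists_sum_smul_eq_zero_and_pos_of_not_linearIndepOn {ι R E : Type*} [Fintype ι]
    [Ring R] [LinearOrder R] [IsOrderedAddMonoid R] [AddCommGroup E] [Module R E] {v : ι → E}
    {s : Finset ι} (hs : ¬ LinearIndepOn R v (s : Set ι)) :
    ∃ d : ι → R, (∀ i ∉ s, d i = 0) ∧ ∑ i, d i • v i = 0 ∧ ∃ i, 0 < d i := by
  classical
  obtain ⟨c, hc, j, hjs, hj⟩ := not_linearIndepOn_finset_iff.mp hs
  let d : ι → R := fun i => if i ∈ s then c i else 0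
  have hd_off : ∀ i ∉ s, d i = 0 := fun i hi => if_neg hi
  have hd_sum : ∑ i, d i • v i = 0 := by
    simpa only [d, ite_smul, zero_smul, Finset.sum_ite_mem, Finset.univ_inter] using hc
  have hdj : d j ≠ 0 := by rwa [show d j = c j from if_pos hjs]
  rcases hdj.lt_or_gt with hneg | hpos
  · exact ⟨-d, fun i hi => neg_eq_zero.mpr (hd_off i hi),
      by simp only [Pi.neg_apply, neg_smul, Finset.sum_neg_distrib, hd_sum, neg_zero],
      j, neg_pos.mpr hneg⟩
  · exact ⟨d, hd_off, hd_sum, j, hpos⟩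

theorem exists_nonneg_sub_smul_apply_eq_zero {ι 𝕜 : Type*} [Finite ι] [Field 𝕜] [LinearOrder 𝕜]
    [IsStrictOrderedRing 𝕜] {w d : ι → 𝕜} (hw : 0 ≤ w) (hd : ∃ i, 0 < d i) :
    ∃ t : 𝕜, 0 ≤ w - t • d ∧ ∃ k, 0 < d k ∧ (w - t • d) k = 0 := by
  obtain ⟨k, hk, hmin⟩ :=
    Set.exists_min_image {i | 0 < d i} (fun i => w i / d i) (Set.toFinite _) hd
  refine ⟨w k / d k, fun i => sub_nonneg.mpr ?_, k, hk,
    sub_eq_zero.mpr (div_mul_cancel₀ (w k) hk.ne').symm⟩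
  rcases lt_or_ge 0 (d i) with hi | hi
  · exact (le_div_iff₀ hi).mp (hmin i hi)
  · exact (mul_nonpos_of_nonneg_of_nonpos (div_nonneg (hw k) hk.le) hi).trans (hw i)

theorem exists_nonneg_sum_smul_eq_and_ssubset_of_not_linearIndepOn {ι 𝕜 E : Type*}
    [Fintype ι] [Field 𝕜] [LinearOrder 𝕜] [IsStrictOrderedRing 𝕜] [AddCommGroup E] [Module 𝕜 E]
    {v : ι → E} {w : ι → 𝕜} (hw : 0 ≤ w)
    (hdep : ¬ LinearIndepOn 𝕜 v (Finset.univ.filter fun i => 0 < w i : Finset ι)) :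
    ∃ w' : ι → 𝕜, 0 ≤ w' ∧ ∑ i, w' i • v i = ∑ i, w i • v i ∧
      (Finset.univ.filter fun i => 0 < w' i) ⊂ (Finset.univ.filter fun i => 0 < w i) := by
  obtain ⟨d, hd_off, hd_sum, hd_pos⟩ :=
    exists_sum_smul_eq_zero_and_pos_of_not_linearIndepOn hdep
  obtain ⟨t, hw', k, hdk, hk⟩ := exists_nonneg_sub_smul_apply_eq_zero hw hd_pos
  simp only [Finset.mem_filter_univ] at hd_off
  have hzero : ∀ i, ¬ 0 < w i → (w - t • d) i = 0 := fun i hi => by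
    have hwi : w i = 0 := le_antisymm (not_lt.mp hi) (hw i)
    simp only [Pi.sub_apply, Pi.smul_apply, hwi, hd_off i hi, smul_zero, sub_zero]
  have hwk : 0 < w k := not_imp_comm.mp (hd_off k) hdk.ne'
  refine ⟨w - t • d, hw', ?_, Finset.ssubset_iff_of_subset ?_ |>.mpr ⟨k, ?_, ?_⟩⟩
  · simp only [Pi.sub_apply, Pi.smul_apply, sub_smul, smul_assoc, Finset.sum_sub_distrib,
      ← Finset.smul_sum, hd_sum, smul_zero, sub_zero]
  · exact Finset.monotone_filter_right _ fun i _ hi => not_imp_comm.mp (hzero i) hi.ne'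
  · exact (Finset.mem_filter_univ k).mpr hwk
  · exact fun hmem => ((Finset.mem_filter_univ k).mp hmem).ne' hk

theorem quadrature_pruning_step_general {D ι 𝕜 : Type*} [Fintype ι] [Field 𝕜] [LinearOrder 𝕜]
    [IsStrictOrderedRing 𝕜] (V : Submodule 𝕜 (D → 𝕜)) [FiniteDimensional 𝕜 V] (L : V →ₗ[𝕜] 𝕜)
    (x : ι → D) (w : ι → 𝕜) (hw : ∀ i, 0 ≤ w i)
    (hexact : ∀ f : V, ∑ i, w i * (f : D → 𝕜) (x i) = L f)
    (hcard : Module.finrank 𝕜 V < (Finset.univ.filter fun i => 0 < w i).card) :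
    ∃ w' : ι → 𝕜, (∀ i, 0 ≤ w' i) ∧
      (∀ f : V, ∑ i, w' i * (f : D → 𝕜) (x i) = L f) ∧
      (Finset.univ.filter fun i => 0 < w' i) ⊂ (Finset.univ.filter fun i => 0 < w i) := by
  let ev : ι → Module.Dual 𝕜 V := fun i => LinearMap.proj (x i) ∘ₗ V.subtype
  have exact_iff (u : ι → 𝕜) :
      ∑ i, u i • ev i = L ↔ ∀ f : V, ∑ i, u i * (f : D → 𝕜) (x i) = L f := by
    simp only [ev, LinearMap.ext_iff, LinearMap.sum_apply, LinearMap.smul_apply, smul_eq_mul,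
      LinearMap.comp_apply, LinearMap.proj_apply, Submodule.subtype_apply]
  rw [← Subspace.dual_finrank_eq] at hcard
  obtain ⟨w', hw', hsum, hsupp⟩ :=
    exists_nonneg_sum_smul_eq_and_ssubset_of_not_linearIndepOn hw
      (not_linearIndepOn_of_finrank_lt_card ev hcard)
  exact ⟨w', hw', (exact_iff w').mp (hsum.trans ((exact_iff w).mpr hexact)), hsupp⟩

/-- Pruning step for nonnegative quadrature rules: if an exact nonnegative-weight
quadrature rule has more than `dim V` strictly positive weights, then there is an
exact nonnegative-weight rule on the same points whose support is a proper subset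
of the original support. -/
theorem quadrature_pruning_step {D : Type*} (V : Submodule ℝ (D → ℝ))
    [FiniteDimensional ℝ V] (L : V →ₗ[ℝ] ℝ) (M : ℕ) (x : Fin M → D)
    (w : Fin M → ℝ) (hw : ∀ i, 0 ≤ w i)
    (hexact : ∀ f : V, ∑ i, w i * (f : D → ℝ) (x i) = L f)
    (hcard : Module.finrank ℝ V < (Finset.univ.filter fun i => 0 < w i).card) :
    ∃ w' : Fin M → ℝ, (∀ i, 0 ≤ w' i) ∧
      (∀ f : V, ∑ i, w' i * (f : D → ℝ) (x i) = L f) ∧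
      (Finset.univ.filter fun i => 0 < w' i) ⊂ (Finset.univ.filter fun i => 0 < w i) :=
  quadrature_pruning_step_general V L x w hw hexact hcard
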